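/- Assume α₁ = 0 and fix x, t ∈ ℝ. Set θ⁺(ζ; x, t) = √ζ (x + 4ζt) for ζ > 0, with the positive square root. Then the linear system Σ_{j=1}^{g} Ω_j ∫_{β_j}^{α_{j+1}} ζ^{k−1}/R(ζ) dζ = Σ_{j=1}^{g} ∫_{β_j}^{α_{j+1}} 2 θ⁺(ζ; x, t) ζ^{k−1}/R(ζ) dζ, for k = 1, …, g, has a unique solution (Ω₁, …, Ω_g) ∈ ℂ^g, and every Ω_j is real. -/

import Mathlib

open Complex Filter

/-!
On each gap `P < 0`, so `R` is purely imaginary there, and `1 / R` has only inverse square root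
singularities at the ends of the gap. Hence the coefficient matrix of the system is `i` times a
real matrix, and so is the right-hand side `i` times a real vector; everything reduces to the
invertibility of the real matrix. If a row vector `v` annihilates it, the polynomial
`∑ v_k ζ ^ k`, of degree less than `g`, integrates to zero over every gap against a weight of
constant sign. It therefore vanishes somewhere on each of the `g` disjoint gaps, so `v = 0`.
-/

section PurelyImaginaryMatrix

open Matrix

variable {n : Type*} [Fintype n] [DecidableEq n] {A : Matrix n n ℂ}

lemma det_ne_zero_of_re_eq_zero (hA : ∀ i j, (A i j).re = 0) (hdet : (A.map im).det ≠ 0) :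
    A.det ≠ 0 := by
  have hAim : A = I • (A.map im).map ofRealHom := by
    ext i j
    apply Complex.ext <;> simp [hA]
  have hmap : ((A.map im).map ofRealHom).det = ((A.map im).det : ℂ) :=
    (RingHom.map_det ofRealHom (A.map im)).symm
  rw [hAim, det_smul, hmap]
  exact mul_ne_zero (pow_ne_zero _ I_ne_zero) (ofReal_ne_zero.mpr hdet)

lemma im_eq_zero_of_re_mulVec_eq_zero (hA : ∀ i j, (A i j).re = 0) (hdet : (A.map im).det ≠ 0)
    {v : n → ℂ} (hv : ∀ i, ((A *ᵥ v) i).re = 0) (j : n) : (v j).im = 0 := by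
  have him : A.map im *ᵥ (im ∘ v) = 0 := by
    ext i
    have hre : ((A *ᵥ v) i).re = -(A.map im *ᵥ (im ∘ v)) i := by
      simp [mulVec, dotProduct, re_sum, mul_re, hA]
    simpa [hv i] using hre.symm
  exact congrFun (eq_zero_of_mulVec_eq_zero hdet him) j

end PurelyImaginaryMatrix

section Integrals

open MeasureTheory Set

variable {l u : ℝ}

lemma integral_eq_ofReal_integral_im_mul_I {f : ℝ → ℂ} (hf : ∀ x ∈ uIoo l u, (f x).re = 0) :
    ∫ x in l..u, f x = ((∫ x in l..u, (f x).im : ℝ) : ℂ) * I := by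
  rw [← intervalIntegral.integral_ofReal, ← intervalIntegral.integral_mul_const]
  refine intervalIntegral.integral_congr_uIoo fun x hx => ?_
  apply Complex.ext <;> simp [hf x hx]

lemma re_integral_ofReal_div_eq_zero {f : ℝ → ℂ} (hf : ∀ x ∈ uIoo l u, (f x).re = 0)
    (q : ℝ → ℝ) : (∫ x in l..u, (q x : ℂ) / f x).re = 0 := by
  rw [integral_eq_ofReal_integral_im_mul_I fun x hx => by simp [div_re, hf x hx]]
  simp

lemma intervalIntegrable_inv_sqrt_sub_mul_sub (hlu : l < u) :
    IntervalIntegrable (fun x => (√((x - l) * (u - x)))⁻¹) volume l u := by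
  refine intervalIntegral.intervalIntegrable_deriv_of_nonneg
    (g := fun x => Real.arcsin ((2 * x - l - u) / (u - l))) (by fun_prop) (fun x hx => ?_)
    (fun x _ => by positivity)
  rw [min_eq_left hlu.le, max_eq_right hlu.le] at hx
  have hlen : 0 < u - l := sub_pos.mpr hlu
  set y := (2 * x - l - u) / (u - l) with hy
  have hy_gt : -1 < y := by rw [hy, lt_div_iff₀ hlen]; linarith [hx.1]
  have hy_lt : y < 1 := by rw [hy, div_lt_iff₀ hlen]; linarith [hx.2]
  have hsqrt : √(1 - y ^ 2) = 2 / (u - l) * √((x - l) * (u - x)) := by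
    rw [← Real.sqrt_sq (div_pos two_pos hlen).le, ← Real.sqrt_mul (sq_nonneg _)]
    congr 1
    rw [hy]
    field_simp
    ring
  have hderiv : HasDerivAt (fun x => (2 * x - l - u) / (u - l)) (2 / (u - l)) x := by
    simpa using ((((hasDerivAt_id x).const_mul 2).sub_const l).sub_const u).div_const (u - l)
  refine ((Real.hasDerivAt_arcsin hy_gt.ne' hy_lt.ne).comp x hderiv).congr_deriv ?_
  rw [hsqrt]
  field_simp

lemma intervalIntegrable_inv_of_mul_le_norm_sq {𝕜 : Type*} [NormedDivisionRing 𝕜] (hlu : l < u)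
    {f : ℝ → 𝕜} (hf : ContinuousOn f (Ioo l u)) {c : ℝ} (hc : 0 < c)
    (hle : ∀ x ∈ Ioo l u, c * ((x - l) * (u - x)) ≤ ‖f x‖ ^ 2) :
    IntervalIntegrable (fun x => (f x)⁻¹) volume l u := by
  have hpos : ∀ x ∈ Ioo l u, 0 < √c * √((x - l) * (u - x)) := fun x hx =>
    mul_pos (Real.sqrt_pos.mpr hc)
      (Real.sqrt_pos.mpr (mul_pos (sub_pos.mpr hx.1) (sub_pos.mpr hx.2)))
  have hnorm : ∀ x ∈ Ioo l u, √c * √((x - l) * (u - x)) ≤ ‖f x‖ := fun x hx => by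
    rw [← Real.sqrt_mul hc.le]
    exact Real.sqrt_le_iff.mpr ⟨norm_nonneg _, hle x hx⟩
  have hne : ∀ x ∈ Ioo l u, f x ≠ 0 := fun x hx =>
    norm_pos_iff.mp ((hpos x hx).trans_le (hnorm x hx))
  have hbound := (intervalIntegrable_inv_sqrt_sub_mul_sub hlu).const_mul (√c)⁻¹
  rw [intervalIntegrable_iff_integrableOn_Ioo_of_le hlu.le] at hbound ⊢
  refine hbound.mono' ((hf.inv₀ hne).aestronglyMeasurable measurableSet_Ioo)
    (ae_restrict_of_forall_mem measurableSet_Ioo fun x hx => ?_)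
  rw [norm_inv, ← mul_inv]
  exact inv_anti₀ (hpos x hx) (hnorm x hx)

lemma forall_pos_or_forall_neg_of_continuousOn {X : Type*} [TopologicalSpace X] {s : Set X}
    (hs : IsPreconnected s) {f : X → ℝ} (hf : ContinuousOn f s) (hne : ∀ x ∈ s, f x ≠ 0) :
    (∀ x ∈ s, 0 < f x) ∨ ∀ x ∈ s, f x < 0 := by
  by_contra! hsign
  obtain ⟨⟨x, hx, hfx⟩, y, hy, hfy⟩ := hsign
  obtain ⟨z, hz, hfz⟩ := hs.intermediate_value hx hy hf ⟨hfx, hfy⟩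
  exact hne z hz hfz

lemma exists_eq_zero_of_integral_mul_eq_zero (hlu : l < u) {f w : ℝ → ℝ}
    (hf : ContinuousOn f (Icc l u)) (hw : ContinuousOn w (Ioo l u))
    (hw_ne : ∀ x ∈ Ioo l u, w x ≠ 0) (hw_int : IntervalIntegrable w volume l u)
    (h : ∫ x in l..u, f x * w x = 0) : ∃ x ∈ Icc l u, f x = 0 := by
  wlog hpos : ∀ x ∈ Ioo l u, 0 < w x generalizing w
  · have hneg := (forall_pos_or_forall_neg_of_continuousOn isPreconnected_Ioo hw hw_ne).resolve_left
      hpos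
    exact this hw.neg (fun x hx => neg_ne_zero.mpr (hw_ne x hx)) hw_int.neg (by simpa using h)
      fun x hx => neg_pos.mpr (hneg x hx)
  have hnonneg : ∀ᵐ x ∂volume.restrict (uIoc l u), 0 ≤ w x := by
    rw [uIoc_of_le hlu.le, ← restrict_Ioo_eq_restrict_Ioc]
    exact ae_restrict_of_forall_mem measurableSet_Ioo fun x hx => (hpos x hx).le
  rw [← uIcc_of_le hlu.le] at hf ⊢
  obtain ⟨x, hx, hmean⟩ := exists_eq_const_mul_intervalIntegral_of_ae_nonneg hf hw_int hnonneg
  have hint_pos := intervalIntegral.intervalIntegral_pos_of_pos_on hw_int hpos hlu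
  exact ⟨x, hx, (mul_eq_zero.mp (hmean.symm.trans h)).resolve_right hint_pos.ne'⟩

lemma det_integral_pow_mul_ne_zero {g : ℕ} {l u : Fin g → ℝ} (hlu : ∀ j, l j < u j)
    (hdisj : Pairwise fun i j => Disjoint (Icc (l i) (u i)) (Icc (l j) (u j)))
    {w : Fin g → ℝ → ℝ} (hw : ∀ j, ContinuousOn (w j) (Ioo (l j) (u j)))
    (hw_ne : ∀ j, ∀ x ∈ Ioo (l j) (u j), w j x ≠ 0)
    (hw_int : ∀ j, IntervalIntegrable (w j) volume (l j) (u j)) :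
    (Matrix.of fun k j : Fin g => ∫ x in (l j)..(u j), x ^ (k : ℕ) * w j x).det ≠ 0 := by
  intro hdet
  obtain ⟨v, hv_ne, hv⟩ := Matrix.exists_vecMul_eq_zero_iff.mpr hdet
  have hzero : ∀ j, ∃ x ∈ Icc (l j) (u j), ∑ k, v k * x ^ (k : ℕ) = 0 := fun j => by
    refine exists_eq_zero_of_integral_mul_eq_zero (hlu j) (by fun_prop) (hw j) (hw_ne j)
      (hw_int j) ?_
    have hint : ∀ k ∈ Finset.univ, IntervalIntegrable
        (fun x => v k * (x ^ (k : ℕ) * w j x)) volume (l j) (u j) := fun k _ =>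
      ((hw_int j).continuousOn_mul (continuous_pow (k : ℕ)).continuousOn).const_mul (v k)
    calc ∫ x in (l j)..(u j), (∑ k, v k * x ^ (k : ℕ)) * w j x
        = ∫ x in (l j)..(u j), ∑ k, v k * (x ^ (k : ℕ) * w j x) := by
          simp only [Finset.sum_mul, mul_assoc]
      _ = ∑ k, v k * ∫ x in (l j)..(u j), x ^ (k : ℕ) * w j x := by
          simp only [intervalIntegral.integral_finsetSum hint, intervalIntegral.integral_const_mul]
      _ = 0 := congrFun hv j
  choose z hz hroot using hzero
  have hz_inj : z.Injective := fun i j hij => by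
    by_contra hne
    exact disjoint_left.mp (hdisj hne) (hz i) (hij ▸ hz j)
  exact hv_ne (Matrix.eq_zero_of_forall_index_sum_mul_pow_eq_zero hz_inj hroot)

end Integrals

lemma re_eq_zero_of_sq_eq_ofReal_of_neg {z : ℂ} {r : ℝ} (hz : z ^ 2 = r) (hr : r < 0) :
    z.re = 0 := by
  have hre : z.re * z.re - z.im * z.im = r := by simpa [sq] using congrArg re hz
  have him : z.re * z.im + z.im * z.re = 0 := by simpa [sq] using congrArg im hz
  by_contra hne
  have him_zero : z.im = 0 :=
    (mul_eq_zero.mp (show z.re * z.im = 0 by linarith)).resolve_left hne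
  rw [him_zero] at hre
  nlinarith [mul_self_nonneg z.re]

/-- The polynomial `P` whose roots are the band edges `a 1, b 1, …, a g, b g, a (g + 1)`, as a
function on `ℝ`. -/
def bandPoly (g : ℕ) (a b : ℕ → ℝ) (x : ℝ) : ℝ :=
  (x - a (g + 1)) * ∏ j ∈ Finset.Icc 1 g, ((x - a j) * (x - b j))

-- Grouped by gaps instead of bands, exactly one quadratic factor is negative on a given gap.
lemma bandPoly_eq_mul_prod_gaps (g : ℕ) (a b : ℕ → ℝ) (x : ℝ) :
    bandPoly g a b x = (x - a 1) * ∏ j ∈ Finset.Icc 1 g, ((x - b j) * (x - a (j + 1))) := by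
  induction g with
  | zero => simp [bandPoly]
  | succ g ih =>
    rw [Finset.prod_Icc_succ_top (by omega), ← mul_assoc, ← ih, bandPoly, bandPoly,
      Finset.prod_Icc_succ_top (by omega)]
    ring

section BandEdges

open Set

variable {g : ℕ} {a b : ℕ → ℝ}
  (hord : ∀ j ∈ Finset.Icc 1 g, a j < b j ∧ b j < a (j + 1))
include hord

lemma strictMonoOn_left_edge : StrictMonoOn a (Icc 1 (g + 1)) :=
  strictMonoOn_of_lt_add_one ordConnected_Icc fun j _ hj hj' =>
    have hmem : j ∈ Finset.Icc 1 g := Finset.mem_Icc.mpr ⟨hj.1, Nat.le_of_succ_le_succ hj'.2⟩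
    (hord j hmem).1.trans (hord j hmem).2

lemma gap_right_lt_gap_left {i j : ℕ} (hi : i ∈ Finset.Icc 1 g) (hj : j ∈ Finset.Icc 1 g)
    (hij : i < j) : a (i + 1) < b j := by
  refine ((strictMonoOn_left_edge hord).monotoneOn ?_ ?_ hij).trans_lt (hord j hj).1 <;>
    simp only [Finset.mem_Icc, mem_Icc] at * <;> omega

lemma disjoint_closed_gaps {i j : ℕ} (hi : i ∈ Finset.Icc 1 g) (hj : j ∈ Finset.Icc 1 g)
    (hij : i ≠ j) : Disjoint (Icc (b i) (a (i + 1))) (Icc (b j) (a (j + 1))) := by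
  wlog hlt : i < j generalizing i j
  · exact (this hj hi hij.symm (by omega)).symm
  exact disjoint_left.mpr fun x hxi hxj =>
    (hxi.2.trans_lt (gap_right_lt_gap_left hord hi hj hlt)).not_ge hxj.1

lemma notMem_bands_of_mem_gap {j : ℕ} (hj : j ∈ Finset.Icc 1 g) {x : ℝ}
    (hx : x ∈ Ioo (b j) (a (j + 1))) :
    x ∉ Ici (a (g + 1)) ∪ ⋃ i ∈ Finset.Icc 1 g, Icc (a i) (b i) := by
  have hright : ∀ i ∈ Icc (j + 1) (g + 1), x < a i := fun i hi => by
    refine hx.2.trans_le ((strictMonoOn_left_edge hord).monotoneOn ?_ ?_ hi.1) <;>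
      simp only [Finset.mem_Icc, mem_Icc] at * <;> omega
  have hj_le := (Finset.mem_Icc.mp hj).2
  simp only [mem_union, mem_Ici, mem_iUnion, not_or, not_exists, not_le]
  refine ⟨hright _ ⟨by omega, le_rfl⟩, fun i hi hxi => ?_⟩
  rcases lt_trichotomy i j with hij | rfl | hij
  · linarith [hx.1, hxi.2, (hord i hi).2, gap_right_lt_gap_left hord hi hj hij]
  · exact hx.1.not_ge hxi.2
  · exact (hright i ⟨hij, (Finset.mem_Icc.mp hi).2.trans g.le_succ⟩).not_ge hxi.1

lemma sub_mul_sub_pos_of_mem_other_gap {i j : ℕ} (hi : i ∈ Finset.Icc 1 g)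
    (hj : j ∈ Finset.Icc 1 g) (hij : i ≠ j) {x : ℝ} (hx : x ∈ Icc (b j) (a (j + 1))) :
    0 < (x - b i) * (x - a (i + 1)) := by
  have hgap := (hord i hi).2
  rcases hij.lt_or_gt with hlt | hlt
  · have hxi : a (i + 1) < x := (gap_right_lt_gap_left hord hi hj hlt).trans_le hx.1
    exact mul_pos (by linarith) (by linarith)
  · have hxi : x < b i := hx.2.trans_lt (gap_right_lt_gap_left hord hj hi hlt)
    exact mul_pos_of_neg_of_neg (by linarith) (by linarith)

lemma left_edge_one_lt_of_gap_left_le {j : ℕ} (hj : j ∈ Finset.Icc 1 g) {x : ℝ} (hx : b j ≤ x) :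
    a 1 < x := by
  refine (((strictMonoOn_left_edge hord).monotoneOn ?_ ?_ (Finset.mem_Icc.mp hj).1).trans_lt
    (hord j hj).1).trans_le hx <;> simp only [Finset.mem_Icc, mem_Icc] at * <;> omega

lemma exists_pos_mul_le_neg_bandPoly {j : ℕ} (hj : j ∈ Finset.Icc 1 g) :
    ∃ c > 0, ∀ x ∈ Icc (b j) (a (j + 1)),
      c * ((x - b j) * (a (j + 1) - x)) ≤ -bandPoly g a b x := by
  set Q : ℝ → ℝ := fun x =>
    (x - a 1) * ∏ i ∈ (Finset.Icc 1 g).erase j, ((x - b i) * (x - a (i + 1))) with hQ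
  have hfactor : ∀ x, -bandPoly g a b x = Q x * ((x - b j) * (a (j + 1) - x)) := fun x => by
    rw [bandPoly_eq_mul_prod_gaps, ← Finset.mul_prod_erase _ _ hj, hQ]
    ring
  have hQ_pos : ∀ x ∈ Icc (b j) (a (j + 1)), 0 < Q x := fun x hx =>
    mul_pos (sub_pos.mpr (left_edge_one_lt_of_gap_left_le hord hj hx.1)) <|
      Finset.prod_pos fun i hi => sub_mul_sub_pos_of_mem_other_gap hord (Finset.mem_of_mem_erase hi)
        hj (Finset.ne_of_mem_erase hi) hx
  obtain ⟨x₀, hx₀, hmin⟩ := isCompact_Icc.exists_isMinOn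
    (nonempty_Icc.mpr (hord j hj).2.le) (show Continuous Q by fun_prop).continuousOn
  refine ⟨Q x₀, hQ_pos x₀ hx₀, fun x hx => ?_⟩
  rw [hfactor]
  exact mul_le_mul_of_nonneg_right (hmin hx)
    (mul_nonneg (sub_nonneg.mpr hx.1) (sub_nonneg.mpr hx.2))

lemma bandPoly_neg_of_mem_gap {j : ℕ} (hj : j ∈ Finset.Icc 1 g) {x : ℝ}
    (hx : x ∈ Ioo (b j) (a (j + 1))) : bandPoly g a b x < 0 := by
  obtain ⟨c, hc, hle⟩ := exists_pos_mul_le_neg_bandPoly hord hj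
  have hpos := mul_pos hc (mul_pos (sub_pos.mpr hx.1) (sub_pos.mpr hx.2))
  linarith [hle x (Ioo_subset_Icc_self hx)]

end BandEdges

section GapPeriods

open Set MeasureTheory Matrix

/-- The coefficient matrix of the linear system: the entry in row `k` and column `j` is the
integral of `ζ ^ k / R ζ` over the gap `(b (j + 1), a (j + 2))`. Rows and columns are numbered from
zero, gaps from one. -/
noncomputable def gapPeriodMatrix (g : ℕ) (a b : ℕ → ℝ) (R : ℝ → ℂ) :
    Matrix (Fin g) (Fin g) ℂ :=
  .of fun k j => ∫ ζ in (b ((j : ℕ) + 1))..(a ((j : ℕ) + 2)), (ζ : ℂ) ^ (k : ℕ) / R ζ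

lemma succ_mem_Icc_one {g : ℕ} (j : Fin g) : (j : ℕ) + 1 ∈ Finset.Icc 1 g :=
  Finset.mem_Icc.mpr ⟨Nat.succ_pos _, j.isLt⟩

variable {g : ℕ} {a b : ℕ → ℝ} {R : ℝ → ℂ}
  (hord : ∀ j ∈ Finset.Icc 1 g, a j < b j ∧ b j < a (j + 1))
  (hR : ∀ j ∈ Finset.Icc 1 g, ContinuousOn R (Ioo (b j) (a (j + 1))))
  (hRsq : ∀ j ∈ Finset.Icc 1 g, ∀ ζ ∈ Ioo (b j) (a (j + 1)), R ζ ^ 2 = bandPoly g a b ζ)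
include hord hRsq

lemma re_eq_zero_of_mem_gap {j : ℕ} (hj : j ∈ Finset.Icc 1 g) {ζ : ℝ}
    (hζ : ζ ∈ Ioo (b j) (a (j + 1))) : (R ζ).re = 0 :=
  re_eq_zero_of_sq_eq_ofReal_of_neg (hRsq j hj ζ hζ) (bandPoly_neg_of_mem_gap hord hj hζ)

lemma ne_zero_of_mem_gap {j : ℕ} (hj : j ∈ Finset.Icc 1 g) {ζ : ℝ}
    (hζ : ζ ∈ Ioo (b j) (a (j + 1))) : R ζ ≠ 0 := by
  rw [← pow_ne_zero_iff two_ne_zero, hRsq j hj ζ hζ, ofReal_ne_zero]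
  exact (bandPoly_neg_of_mem_gap hord hj hζ).ne

lemma re_gap_integral_ofReal_div_eq_zero {j : ℕ} (hj : j ∈ Finset.Icc 1 g) (q : ℝ → ℝ) :
    (∫ ζ in (b j)..(a (j + 1)), (q ζ : ℂ) / R ζ).re = 0 :=
  re_integral_ofReal_div_eq_zero (fun ζ hζ => re_eq_zero_of_mem_gap hord hRsq hj <| by
    rwa [uIoo_of_le (hord j hj).2.le] at hζ) q

lemma re_gapPeriodMatrix (k j : Fin g) : (gapPeriodMatrix g a b R k j).re = 0 := by
  simpa [gapPeriodMatrix] using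
    re_gap_integral_ofReal_div_eq_zero hord hRsq (succ_mem_Icc_one j) fun ζ => ζ ^ (k : ℕ)

include hR

lemma intervalIntegrable_inv_gap {j : ℕ} (hj : j ∈ Finset.Icc 1 g) :
    IntervalIntegrable (fun ζ => (R ζ)⁻¹) volume (b j) (a (j + 1)) := by
  obtain ⟨c, hc, hle⟩ := exists_pos_mul_le_neg_bandPoly hord hj
  refine intervalIntegrable_inv_of_mul_le_norm_sq (hord j hj).2 (hR j hj) hc fun ζ hζ => ?_
  rw [← norm_pow, hRsq j hj ζ hζ, norm_real, Real.norm_eq_abs,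
    abs_of_neg (bandPoly_neg_of_mem_gap hord hj hζ)]
  exact hle ζ (Ioo_subset_Icc_self hζ)

lemma gapPeriodMatrix_map_im : (gapPeriodMatrix g a b R).map im =
    .of fun k j : Fin g =>
      ∫ ζ in (b ((j : ℕ) + 1))..(a ((j : ℕ) + 2)), ζ ^ (k : ℕ) * (R ζ)⁻¹.im := by
  ext k j
  have hint : IntervalIntegrable (fun ζ : ℝ => (ζ : ℂ) ^ (k : ℕ) * (R ζ)⁻¹) volume
      (b ((j : ℕ) + 1)) (a ((j : ℕ) + 2)) :=
    (intervalIntegrable_inv_gap hord hR hRsq (succ_mem_Icc_one j)).continuousOn_mul (by fun_prop)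
  simp only [gapPeriodMatrix, map_apply, of_apply, div_eq_mul_inv]
  rw [← RCLike.im_eq_complex_im, ← intervalIntegral.intervalIntegral_im hint]
  simp only [RCLike.im_eq_complex_im, ← ofReal_pow, im_ofReal_mul]

lemma det_gapPeriodMatrix_map_im_ne_zero : ((gapPeriodMatrix g a b R).map im).det ≠ 0 := by
  have hint := fun j : Fin g => intervalIntegrable_inv_gap hord hR hRsq (succ_mem_Icc_one j)
  rw [gapPeriodMatrix_map_im hord hR hRsq]
  refine det_integral_pow_mul_ne_zero (w := fun _ ζ => (R ζ)⁻¹.im)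
    (fun j => (hord _ (succ_mem_Icc_one j)).2)
    (fun i j hij => disjoint_closed_gaps hord (succ_mem_Icc_one i) (succ_mem_Icc_one j)
      (by simpa [Fin.val_inj] using hij))
    (fun j => continuous_im.comp_continuousOn <| (hR _ (succ_mem_Icc_one j)).inv₀ fun ζ hζ =>
      ne_zero_of_mem_gap hord hRsq (succ_mem_Icc_one j) hζ)
    (fun j ζ hζ him => ?_) fun j => ⟨(hint j).1.im, (hint j).2.im⟩
  refine inv_ne_zero (ne_zero_of_mem_gap hord hRsq (succ_mem_Icc_one j) hζ) (Complex.ext ?_ him)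
  simp [inv_re, re_eq_zero_of_mem_gap hord hRsq (succ_mem_Icc_one j) hζ]

theorem stmt_9_general (c : Fin g → ℂ) :
    (∃! Ωv : Fin g → ℂ, ∀ k : Fin g,
      ∑ j : Fin g, Ωv j *
          ∫ ζ in (b ((j : ℕ) + 1))..(a ((j : ℕ) + 2)), (ζ : ℂ) ^ (k : ℕ) / R ζ = c k) ∧
    ((∀ k, (c k).re = 0) → ∀ Ωv : Fin g → ℂ,
      (∀ k : Fin g,
        ∑ j : Fin g, Ωv j *
            ∫ ζ in (b ((j : ℕ) + 1))..(a ((j : ℕ) + 2)), (ζ : ℂ) ^ (k : ℕ) / R ζ = c k) →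
      ∀ j : Fin g, (Ωv j).im = 0) := by
  have hre := re_gapPeriodMatrix hord hRsq
  have hdet_im := det_gapPeriodMatrix_map_im_ne_zero hord hR hRsq
  have hsystem : ∀ Ωv : Fin g → ℂ, (∀ k : Fin g,
      ∑ j : Fin g, Ωv j *
        ∫ ζ in (b ((j : ℕ) + 1))..(a ((j : ℕ) + 2)), (ζ : ℂ) ^ (k : ℕ) / R ζ = c k) ↔
      gapPeriodMatrix g a b R *ᵥ Ωv = c := fun Ωv => by
    simp [funext_iff, mulVec, dotProduct, gapPeriodMatrix, mul_comm]
  simp only [hsystem]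
  constructor
  · have hinj := mulVec_injective_of_det_ne_zero (det_ne_zero_of_re_eq_zero hre hdet_im)
    have hunit := mulVec_injective_iff_isUnit.mp hinj
    exact (show Function.Bijective (gapPeriodMatrix g a b R).mulVec from
      ⟨hinj, mulVec_surjective_iff_isUnit.mpr hunit⟩).existsUnique c
  · rintro hc Ωv rfl
    exact im_eq_zero_of_re_mulVec_eq_zero hre hdet_im hc

end GapPeriods

/-- Assume `α₁ = 0`, fix `x, t ∈ ℝ`, and set `θ⁺(ζ) = √ζ (x + 4ζt)` for
`ζ > 0`.  With `R` the usual square root of `P` on `ℂ ∖ σ_B`, the linear system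
`∑_j Ω_j ∫_{β_j}^{α_{j+1}} ζ^{k-1}/R dζ = ∑_j ∫_{β_j}^{α_{j+1}} 2θ⁺(ζ) ζ^{k-1}/R dζ`
(`k = 1, …, g`) has a unique solution `(Ω₁, …, Ω_g) ∈ ℂ^g`, and every `Ω_j` is real. -/
theorem stmt_9
    (g : ℕ) (hg : 1 ≤ g) (a b : ℕ → ℝ)
    (ha1 : a 1 = 0)
    (hord : ∀ j ∈ Finset.Icc 1 g, a j < b j ∧ b j < a (j + 1))
    (P : ℂ → ℂ)
    (hP : ∀ z : ℂ, P z = (z - (a (g + 1) : ℂ)) *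
      ∏ j ∈ Finset.Icc 1 g, ((z - (a j : ℂ)) * (z - (b j : ℂ))))
    (σB : Set ℝ)
    (hσB : σB = Set.Ici (a (g + 1)) ∪ ⋃ j ∈ Finset.Icc 1 g, Set.Icc (a j) (b j))
    (Ω : Set ℂ) (hΩ : Ω = {z : ℂ | ¬(z.im = 0 ∧ z.re ∈ σB)})
    (R : ℂ → ℂ)
    (hRanal : DifferentiableOn ℂ R Ω)
    (hRsq : ∀ z ∈ Ω, R z ^ 2 = P z)
    (hRasym : Tendsto (fun x : ℝ => R (x : ℂ) / (((|x| ^ ((g : ℝ) + 1/2) : ℝ)) : ℂ))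
      atBot (nhds ((-1 : ℂ) ^ g * Complex.I)))
    (hRgap : ∀ j ∈ Finset.Icc 1 g, ∀ x ∈ Set.Ioo (b j) (a (j + 1)),
      (R (x : ℂ)).re = 0 ∧ R (x : ℂ) ≠ 0)
    (x t : ℝ) :
    (∃! Ωv : Fin g → ℂ, ∀ k : Fin g,
      ∑ j : Fin g, Ωv j *
          ∫ ζ in (b ((j : ℕ) + 1))..(a ((j : ℕ) + 2)), (ζ : ℂ) ^ (k : ℕ) / R (ζ : ℂ)
        = ∑ j : Fin g,
          ∫ ζ in (b ((j : ℕ) + 1))..(a ((j : ℕ) + 2)),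
            2 * ((Real.sqrt ζ * (x + 4 * ζ * t) : ℝ) : ℂ) * (ζ : ℂ) ^ (k : ℕ) / R (ζ : ℂ)) ∧
    (∀ Ωv : Fin g → ℂ,
      (∀ k : Fin g,
        ∑ j : Fin g, Ωv j *
            ∫ ζ in (b ((j : ℕ) + 1))..(a ((j : ℕ) + 2)), (ζ : ℂ) ^ (k : ℕ) / R (ζ : ℂ)
          = ∑ j : Fin g,
            ∫ ζ in (b ((j : ℕ) + 1))..(a ((j : ℕ) + 2)),
              2 * ((Real.sqrt ζ * (x + 4 * ζ * t) : ℝ) : ℂ) * (ζ : ℂ) ^ (k : ℕ) / R (ζ : ℂ)) →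
      ∀ j : Fin g, (Ωv j).im = 0) := by
  have hgap : ∀ j ∈ Finset.Icc 1 g, ∀ ζ ∈ Set.Ioo (b j) (a (j + 1)), (ζ : ℂ) ∈ Ω :=
    fun j hj ζ hζ => by
      rw [hΩ, hσB]
      exact fun hmem => notMem_bands_of_mem_gap hord hj hζ hmem.2
  have hRcont : ∀ j ∈ Finset.Icc 1 g,
      ContinuousOn (fun ζ : ℝ => R ζ) (Set.Ioo (b j) (a (j + 1))) := fun j hj =>
    hRanal.continuousOn.comp continuous_ofReal.continuousOn (hgap j hj)
  have hRsq_gap : ∀ j ∈ Finset.Icc 1 g, ∀ ζ ∈ Set.Ioo (b j) (a (j + 1)),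
      R (ζ : ℂ) ^ 2 = bandPoly g a b ζ := fun j hj ζ hζ => by
    simp [hRsq _ (hgap j hj ζ hζ), hP, bandPoly]
  refine (stmt_9_general hord hRcont hRsq_gap _).imp_right fun hreal => hreal fun k => ?_
  rw [re_sum]
  refine Finset.sum_eq_zero fun j _ => ?_
  simpa using re_gap_integral_ofReal_div_eq_zero hord hRsq_gap (succ_mem_Icc_one j)
    fun ζ => 2 * (√ζ * (x + 4 * ζ * t)) * ζ ^ (k : ℕ)
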